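/- Let q be a prime number, s ∈ ℕ, and let (k₁,…,k_s), (ℓ₁,…,ℓ_s) ∈ ℕ^s be tuples of positive integers that are not strongly dependent over ZMod q. Let m₁, m₂ ∈ ℕ and set M(k₁,…,k_s; m₁) = {(C₁,…,C_s) : ν(C₁ᵀk⃗₁ + ⋯ + C_sᵀk⃗_s) ≤ −m₁} and M(ℓ₁,…,ℓ_s; m₂) = {(C₁,…,C_s) : ν(C₁ᵀℓ⃗₁ + ⋯ + C_sᵀℓ⃗_s) ≤ −m₂}. Then these two events are independent with respect to μ_s: μ_s(M(k₁,…,k_s; m₁) ∩ M(ℓ₁,…,ℓ_s; m₂)) = μ_s(M(k₁,…,k_s; m₁)) · μ_s(M(ℓ₁,…,ℓ_s; m₂)) = q^{−(m₁+m₂−2)}. -/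

import Mathlib

open MeasureTheory Filter
open scoped ENNReal

noncomputable section

/-- The base-`q` digit vector `k⃗ = (κ₀, κ₁, κ₂, …)` of a natural number `k`,
with values in `ZMod q`. -/
def digitVec (q k : ℕ) : ℕ → ZMod q := fun i => ((k / q ^ i) % q : ℕ)

/-- `len q k = ⌊log_q k⌋`, the index of the leading base-`q` digit of `k`. -/
def len (q k : ℕ) : ℕ := Nat.log q k

/-- Transpose of an `ℕ × ℕ` matrix over `ZMod q`. -/
def transp {q : ℕ} (C : ℕ → ℕ → ZMod q) : ℕ → ℕ → ZMod q := fun i j => C j i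

/-- The matrix `C` applied to the digit vector of `k` (a finite sum, since the digit
vector of `k` is supported on indices `≤ k`), all arithmetic modulo `q`. -/
def matVec {q : ℕ} (C : ℕ → ℕ → ZMod q) (k : ℕ) : ℕ → ZMod q :=
  fun i => ∑ j ∈ Finset.range (k + 1), C i j * digitVec q k j

/-- `nuLe b m` expresses `ν(b⃗) ≤ -m` for `b⃗ = (b₁, b₂, …) = (b 0, b 1, …)`:
the first `m - 1` coordinates of `b⃗` vanish.  (In particular it holds for `b⃗ = 0⃗`,
where `ν(0⃗) = -∞`.) -/
def nuLe {q : ℕ} (b : ℕ → ZMod q) (m : ℕ) : Prop := ∀ i, i < m - 1 → b i = 0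

/-- `ω_q = exp(2πi/q)`. -/
def omega (q : ℕ) : ℂ := Complex.exp (2 * Real.pi * Complex.I / q)

/-- The value of the `j`-th `q`-adic Walsh function on a digit vector
`v⃗ = (v₁, v₂, …) = (v 0, v 1, …)`: with `j = j₀ + j₁ q + ⋯`, this is
`ω_q^(j₀ v₁ + j₁ v₂ + ⋯)`, the exponent computed in `ZMod q` (a finite sum, since all
base-`q` digits of `j` with index `≥ j` vanish). -/
def wal (q j : ℕ) (v : ℕ → ZMod q) : ℂ :=
  omega q ^ (∑ i ∈ Finset.range (j + 1), digitVec q j i * v i).val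

/-- The digit `ξ_{i+1} ∈ ZMod q` of the `q`-adic expansion
`x = ξ₁ q⁻¹ + ξ₂ q⁻² + ⋯` of `x ∈ [0,1)` (the expansion with infinitely many digits
different from `q - 1`). -/
def realDigit (q : ℕ) (x : ℝ) : ℕ → ZMod q := fun i => ((⌊x * (q : ℝ) ^ (i + 1)⌋ : ℤ) : ZMod q)

/-- The `j`-th `q`-adic Walsh function `wal_j : [0,1) → ℂ`. -/
def walReal (q j : ℕ) (x : ℝ) : ℂ := wal q j (realDigit q x)

/-- The digital sequence over `ZMod q` with generating matrices `C 1, …, C s`: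
the `j`-th coordinate of the `n`-th point is `x_{n,j} = Σ_i (C_j n⃗)_i q^{-(i+1)}`. -/
def digitalSeq {q s : ℕ} (C : Fin s → ℕ → ℕ → ZMod q) (n : ℕ) : Fin s → ℝ :=
  fun j => ∑' i : ℕ, ((matVec (C j) n i).val : ℝ) / (q : ℝ) ^ (i + 1)

/-- The local discrepancy `D(x, N)` of the sequence `y` in `[0,1)^s`. -/
def localDisc {s : ℕ} (y : ℕ → Fin s → ℝ) (x : Fin s → ℝ) (N : ℕ) : ℝ :=
  (Nat.card {n : ℕ | n < N ∧ ∀ j, y n j ∈ Set.Ico 0 (x j)} : ℝ) - N * ∏ j, x j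

/-- The star discrepancy `D*_N` of the sequence `y` in `[0,1)^s`. -/
def starDisc {s : ℕ} (y : ℕ → Fin s → ℝ) (N : ℕ) : ℝ :=
  sSup {d : ℝ | ∃ x : Fin s → ℝ, (∀ j, x j ∈ Set.Icc (0 : ℝ) 1) ∧ d = |localDisc y x N|}

/-- `IsUniformMatrixMeasure μ` says that `μ` is the measure `μ` of the paper on the
space `(ZMod q)^{ℕ×ℕ}` of `ℕ × ℕ` matrices over `ZMod q`: the product over `ℕ × ℕ` of
uniform probability measures on `ZMod q`, characterized as the probability measure
giving each finite cylinder set (finitely many prescribed entries) the measure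
`q^{-(number of prescribed entries)}`. -/
def IsUniformMatrixMeasure {q : ℕ} (μ : Measure (ℕ → ℕ → ZMod q)) : Prop :=
  IsProbabilityMeasure μ ∧
    ∀ (F : Finset (ℕ × ℕ)) (g : ℕ × ℕ → ZMod q),
      μ {C | ∀ p ∈ F, C p.1 p.2 = g p} = ((q : ℝ≥0∞)⁻¹) ^ F.card

/-- `IsUniformMatrixTupleMeasure μs` says that `μs` is the measure `μ_s` of the paper on
the space `((ZMod q)^{ℕ×ℕ})^s` of `s`-tuples of `ℕ × ℕ` matrices over `ZMod q`: the
`s`-fold product of the product over `ℕ × ℕ` of uniform probability measures on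
`ZMod q`, characterized as the probability measure giving each finite cylinder set
(finitely many prescribed entries) the measure `q^{-(number of prescribed entries)}`. -/
def IsUniformMatrixTupleMeasure {q s : ℕ} (μs : Measure (Fin s → ℕ → ℕ → ZMod q)) : Prop :=
  IsProbabilityMeasure μs ∧
    ∀ (F : Finset (Fin s × ℕ × ℕ)) (g : Fin s × ℕ × ℕ → ZMod q),
      μs {C | ∀ p ∈ F, C p.1 p.2.1 p.2.2 = g p} = ((q : ℝ≥0∞)⁻¹) ^ F.card

/-!
The entries of a `μ_s`-random tuple of matrices are independent and uniform on `ZMod q`, so any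
finite family of them is uniform on a finite vector space, and a surjective homomorphism of finite
groups carries the uniform law to the uniform law. The coordinates of `C₁ᵀk⃗₁ + ⋯ + C_sᵀk⃗_s` and
`C₁ᵀℓ⃗₁ + ⋯ + C_sᵀℓ⃗_s` are linear forms in these entries: the `i`-th coordinates are obtained from
the `i`-th columns of the matrices alone, by pairing them with the concatenated digit vectors of the
two tuples. Two nonzero tuples that are not strongly dependent have linearly independent digit
vectors, so these forms map the entries onto all possible values. Hence any `N` of the coordinates
are uniform on `(ZMod q)^N` and vanish together with probability `q^{-N}`.
-/

open ProbabilityTheory Matrix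
open scoped Kronecker

theorem hasLaw_uniformOn_univ_of_measure_fiber_eq {Ω E : Type*} [MeasurableSpace Ω]
    [MeasurableSpace E] [MeasurableSingletonClass E] [Finite E] {μ : Measure Ω}
    [IsProbabilityMeasure μ] {Y : Ω → E} (hY : Measurable Y)
    (hfib : ∀ x y, μ (Y ⁻¹' {x}) = μ (Y ⁻¹' {y})) :
    HasLaw Y (uniformOn Set.univ) μ where
  map_eq := by
    have := Fintype.ofFinite E
    refine Measure.ext_of_singleton fun x => ?_
    have htotal : Fintype.card E * μ (Y ⁻¹' {x}) = 1 := calc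
      Fintype.card E * μ (Y ⁻¹' {x}) = ∑ y, μ (Y ⁻¹' {y}) := by simp [hfib _ x]
      _ = μ (Y ⁻¹' ↑(Finset.univ : Finset E)) :=
        sum_measure_preimage_singleton _ fun y _ => hY (measurableSet_singleton y)
      _ = 1 := by simp
    rw [Measure.map_apply hY (measurableSet_singleton x), uniformOn_univ, Measure.count_singleton,
      one_div, ENNReal.eq_inv_of_mul_eq_one_left ((mul_comm _ _).trans htotal)]

theorem hasLaw_uniformOn_univ_of_surjective {G H F : Type*} [AddGroup G] [AddGroup H] [Finite G]
    [Finite H] [MeasurableSpace G] [MeasurableSpace H] [MeasurableSingletonClass G]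
    [MeasurableSingletonClass H] [FunLike F G H] [AddMonoidHomClass F G H] {f : F}
    (hf : Function.Surjective f) :
    HasLaw f (uniformOn Set.univ) (uniformOn Set.univ) := by
  classical
  have := Fintype.ofFinite G
  refine hasLaw_uniformOn_univ_of_measure_fiber_eq (.of_discrete) fun x y => ?_
  have hcount (z : H) :
      Measure.count (f ⁻¹' {z}) = (Finset.card {g | f g = z} : ℝ≥0∞) := by
    rw [← Measure.count_apply_finset]
    congr
    ext
    simp
  rw [uniformOn_univ, uniformOn_univ, hcount, hcount,
    AddMonoidHom.card_fiber_eq_of_mem_range f (hf x) (hf y)]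

theorem linearIndependent_pair_of_forall_ne_smul {K V : Type*} [DivisionRing K] [AddCommGroup V]
    [Module K V] {x y : V} (hx : x ≠ 0) (hy : y ≠ 0) (hxy : ∀ c : K, c ≠ 0 → x ≠ c • y) :
    LinearIndependent K ![x, y] := by
  rw [LinearIndependent.pair_symm_iff, LinearIndependent.pair_iff' hy]
  rintro c rfl
  exact hxy c (by rintro rfl; simp at hx) rfl

theorem linearIndependent_comp_right_of_support_subset_range {R ι η η' : Type*} [Semiring R]
    {v : ι → η' → R} (hv : LinearIndependent R v) {e : η → η'}
    (hsupp : ∀ i, Function.support (v i) ⊆ Set.range e) :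
    LinearIndependent R fun i => v i ∘ e := by
  refine LinearIndependent.of_comp (Function.ExtendByZero.linearMap R e) ?_
  convert hv using 1
  funext i x
  change Function.extend e (v i ∘ e) 0 x = v i x
  by_cases hx : ∃ y, e y = x
  · obtain ⟨y, rfl⟩ := hx
    exact Function.FactorsThrough.extend_apply (fun _ _ h => congrArg (v i) h) 0 y
  · rw [Function.extend_apply' _ _ _ hx]
    exact (Function.notMem_support.mp fun h => hx (hsupp i h)).symm

theorem mulVec_surjective_of_linearIndependent_row {K l m : Type*} [Field K] [Finite l] [Fintype m]
    {A : Matrix l m K} (hA : LinearIndependent K A.row) : Function.Surjective A.mulVec := by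
  have := Fintype.ofFinite l
  have hrank : A.rank = Module.finrank K (l → K) := by
    rw [hA.rank_matrix, Module.finrank_fintype_fun_eq_card]
  exact LinearMap.range_eq_top.mp (Submodule.eq_top_of_finrank_eq hrank)

section MulVec

variable {R l m n o : Type*} [CommSemiring R] [Fintype m] [Fintype o]

theorem mulVec_kronecker_surjective [Finite l] [Finite n] {A : Matrix l m R} {B : Matrix n o R}
    (hA : Function.Surjective A.mulVec) (hB : Function.Surjective B.mulVec) :
    Function.Surjective (A ⊗ₖ B).mulVec := by
  classical
  rw [mulVec_surjective_iff_exists_right_inverse] at hA hB ⊢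
  obtain ⟨A', hA'⟩ := hA
  obtain ⟨B', hB'⟩ := hB
  exact ⟨A' ⊗ₖ B', by rw [← mul_kronecker_mul, hA', hB', one_kronecker_one]⟩

theorem mulVec_submatrix_surjective_of_injective {A : Matrix l m R}
    (hA : Function.Surjective A.mulVec) {c : n → l} (hc : Function.Injective c) :
    Function.Surjective (A.submatrix c id).mulVec :=
  (LinearMap.funLeft_surjective_of_injective R R c hc).comp hA

theorem kronecker_one_mulVec_apply [DecidableEq o] (A : Matrix l m R) (x : m × o → R)
    (i : l) (j : o) :
    ((A ⊗ₖ (1 : Matrix o o R)) *ᵥ x) (i, j) = ∑ p, A i p * x (p, j) := by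
  simp [mulVec, dotProduct, Fintype.sum_prod_type, one_apply]

end MulVec

section Digits

variable {q : ℕ}

theorem digitVec_eq_zero_of_le (hq : 1 < q) {k j : ℕ} (hkj : k ≤ j) : digitVec q k j = 0 := by
  simp [digitVec, Nat.div_eq_of_lt (hkj.trans_lt (Nat.lt_pow_self hq))]

theorem digitVec_len_ne_zero (hq : 1 < q) {k : ℕ} (hk : k ≠ 0) : digitVec q k (len q k) ≠ 0 := by
  have hpos : 0 < k / q ^ len q k := Nat.div_pos (Nat.pow_log_le_self q hk) (by positivity)
  have hlt : k / q ^ len q k < q := by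
    rw [Nat.div_lt_iff_lt_mul (by positivity), ← pow_succ']
    exact Nat.lt_pow_succ_log_self hq k
  rw [digitVec, Nat.mod_eq_of_lt hlt, Ne, ZMod.natCast_eq_zero_iff]
  exact Nat.not_dvd_of_pos_of_lt hpos hlt

/-- The digit vectors `k⃗₁, …, k⃗_s` of a tuple of natural numbers, concatenated to a single vector
whose entry at `(u, j)` is the digit of `k u` at `q ^ j`. -/
def digitTuple (q : ℕ) {ι : Type*} (k : ι → ℕ) : ι × ℕ → ZMod q := fun p => digitVec q (k p.1) p.2

theorem digitTuple_ne_zero (hq : 1 < q) {ι : Type*} {k : ι → ℕ} (hk : k ≠ 0) :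
    digitTuple q k ≠ 0 := by
  obtain ⟨u, hu⟩ := Function.ne_iff.mp hk
  exact Function.ne_iff.mpr ⟨(u, len q (k u)), digitVec_len_ne_zero hq hu⟩

theorem support_digitTuple_subset_range (hq : 1 < q) {ι : Type*} {k : ι → ℕ} {J : ℕ}
    (hk : ∀ u, k u < J) :
    Function.support (digitTuple q k) ⊆ Set.range (Prod.map id Fin.val : ι × Fin J → ι × ℕ) := by
  rintro ⟨u, j⟩ hj
  have hjk : j < k u := by
    by_contra! hkj
    exact hj (digitVec_eq_zero_of_le hq hkj)
  exact ⟨(u, ⟨j, hjk.trans (hk u)⟩), rfl⟩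

theorem matVec_eq_sum_fin (hq : 1 < q) (C : ℕ → ℕ → ZMod q) {k J : ℕ} (hk : k < J) (i : ℕ) :
    matVec C k i = ∑ j : Fin J, digitVec q k j * C i j := by
  rw [Fin.sum_univ_eq_sum_range fun j => digitVec q k j * C i j, matVec,
    Finset.sum_subset (Finset.range_mono (Nat.succ_le_of_lt hk))]
  · exact Finset.sum_congr rfl fun j _ => mul_comm _ _
  · intro j _ hj
    rw [digitVec_eq_zero_of_le hq (by grind), mul_zero]

/-- The matrix whose rows are the concatenated digit vectors of the tuples `k a`, each digit vector
being truncated to its first `J` entries so that there are finitely many columns. -/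
def digitMatrix (q J : ℕ) {A ι : Type*} (k : A → ι → ℕ) : Matrix A (ι × Fin J) (ZMod q) :=
  .of fun a => digitTuple q (k a) ∘ Prod.map id Fin.val

theorem sum_matVec_transp_eq_sum_digitMatrix {A ι : Type*} [Fintype ι] (hq : 1 < q)
    (C : ι → ℕ → ℕ → ZMod q) {k : A → ι → ℕ} {a : A} {J : ℕ} (hk : ∀ u, k a u < J) (i : ℕ) :
    ∑ u, matVec (transp (C u)) (k a u) i
      = ∑ p : ι × Fin J, digitMatrix q J k a p * C p.1 p.2 i := by
  rw [Fintype.sum_prod_type]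
  exact Finset.sum_congr rfl fun u _ => matVec_eq_sum_fin hq _ (hk u) i

theorem digitMatrix_mulVec_surjective [Fact q.Prime] {A ι : Type*} [Finite A] [Fintype ι]
    {k : A → ι → ℕ} {J : ℕ} (hJ : ∀ a u, k a u < J)
    (hk : LinearIndependent (ZMod q) fun a => digitTuple q (k a)) :
    Function.Surjective (digitMatrix q J k).mulVec :=
  mulVec_surjective_of_linearIndependent_row <|
    linearIndependent_comp_right_of_support_subset_range hk fun a =>
      support_digitTuple_subset_range (Fact.out : q.Prime).one_lt (hJ a)

end Digits

/-- The event `M(k₁, …, k_s; m) = {ν(C₁ᵀk⃗₁ + ⋯ + C_sᵀk⃗_s) ≤ -m}` on the space of `s`-tuples of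
`ℕ × ℕ` matrices. -/
def nuLeSet (q : ℕ) {s : ℕ} (k : Fin s → ℕ) (m : ℕ) : Set (Fin s → ℕ → ℕ → ZMod q) :=
  {C | nuLe (fun i => ∑ u, matVec (transp (C u)) (k u) i) m}

section UniformMatrixTuple

variable {q s : ℕ} {μs : Measure (Fin s → ℕ → ℕ → ZMod q)}

theorem IsUniformMatrixTupleMeasure.hasLaw_entries [NeZero q]
    (hμs : IsUniformMatrixTupleMeasure μs)
    {ι : Type*} [Finite ι] {e : ι → Fin s × ℕ × ℕ} (he : Function.Injective e) :
    HasLaw (fun C i => C (e i).1 (e i).2.1 (e i).2.2) (uniformOn (Set.univ : Set (ι → ZMod q)))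
      μs := by
  have := Fintype.ofFinite ι
  have := hμs.1
  refine hasLaw_uniformOn_univ_of_measure_fiber_eq (by fun_prop) fun x y => ?_
  have hcylinder (z : ι → ZMod q) :
      μs ((fun C i => C (e i).1 (e i).2.1 (e i).2.2) ⁻¹' {z})
        = (q : ℝ≥0∞)⁻¹ ^ (Finset.univ.map ⟨e, he⟩).card := by
    rw [← hμs.2 _ (Function.extend e z 0)]
    congr
    ext C
    simp [funext_iff, he.extend_apply]
  rw [hcylinder, hcylinder]

variable [Fact q.Prime] {A : Type*} {k : A → Fin s → ℕ}

theorem IsUniformMatrixTupleMeasure.hasLaw_sum_matVec_transp [Finite A]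
    (hμs : IsUniformMatrixTupleMeasure μs)
    (hk : LinearIndependent (ZMod q) fun a => digitTuple q (k a)) {ι : Type*} [Finite ι]
    {c : ι → A × ℕ} (hc : Function.Injective c) :
    HasLaw (fun C i => ∑ u, matVec (transp (C u)) (k (c i).1 u) (c i).2)
      (uniformOn (Set.univ : Set (ι → ZMod q))) μs := by
  classical
  obtain ⟨J, hJ⟩ : ∃ J, ∀ a u, k a u < J := by
    obtain ⟨N, hN⟩ := (Set.finite_range (Function.uncurry k)).bddAbove
    exact ⟨N + 1, fun a u => Nat.lt_succ_of_le (hN ⟨(a, u), rfl⟩)⟩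
  let I := Set.range fun i => (c i).2
  have := Fintype.ofFinite I
  let c' : ι → A × I := fun i => ((c i).1, ⟨(c i).2, i, rfl⟩)
  have hc' : Function.Injective c' := fun _ _ h =>
    hc (Prod.ext (congrArg (·.1) h) (congrArg (fun w => (w.2 : ℕ)) h))
  let L := ((digitMatrix q J k ⊗ₖ (1 : Matrix I I (ZMod q))).submatrix c' id).mulVecLin
  have hone : Function.Surjective (1 : Matrix I I (ZMod q)).mulVec := fun y => ⟨y, one_mulVec y⟩
  have hL : Function.Surjective L :=
    mulVec_submatrix_surjective_of_injective
      (mulVec_kronecker_surjective (digitMatrix_mulVec_surjective hJ hk) hone) hc'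
  have hentries := hμs.hasLaw_entries
    (e := fun p : (Fin s × Fin J) × I => (p.1.1, (p.1.2 : ℕ), (p.2 : ℕ))) (by
      rintro ⟨⟨u, j⟩, i⟩ ⟨⟨u', j'⟩, i'⟩ h
      simp_all [Fin.ext_iff, Subtype.ext_iff])
  convert (hasLaw_uniformOn_univ_of_surjective hL).comp hentries using 1
  ext C i
  rw [sum_matVec_transp_eq_sum_digitMatrix (Fact.out : q.Prime).one_lt C (hJ _)]
  exact (kronecker_one_mulVec_apply (digitMatrix q J k)
    (fun p : (Fin s × Fin J) × I => C p.1.1 p.1.2 p.2) (c i).1 (c' i).2).symm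

theorem IsUniformMatrixTupleMeasure.measure_iInter_nuLeSet [Fintype A]
    (hμs : IsUniformMatrixTupleMeasure μs)
    (hk : LinearIndependent (ZMod q) fun a => digitTuple q (k a)) (m : A → ℕ) :
    μs (⋂ a, nuLeSet q (k a) (m a)) = (q : ℝ≥0∞)⁻¹ ^ ∑ a, (m a - 1) := by
  classical
  let c : (Σ a, Fin (m a - 1)) → A × ℕ := fun w => (w.1, w.2)
  have hc : Function.Injective c := by
    rintro ⟨a, i⟩ ⟨b, j⟩ h
    simp only [c, Prod.mk.injEq] at h
    obtain ⟨rfl, hij⟩ := h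
    rw [Fin.ext hij]
  have hset : ⋂ a, nuLeSet q (k a) (m a)
      = {C | (fun w => ∑ u, matVec (transp (C u)) (k (c w).1 u) (c w).2) = 0} := by
    ext C
    simp [nuLeSet, nuLe, c, funext_iff, Sigma.forall, Fin.forall_iff]
  rw [hset, (hμs.hasLaw_sum_matVec_transp hk hc).measure_eq (p := (· = 0)) (.of_discrete),
    Set.ofPred_eq_eq_singleton, uniformOn_univ, Measure.count_singleton]
  simp [ZMod.card, Fintype.card_sigma, ENNReal.inv_pow]

theorem IsUniformMatrixTupleMeasure.measure_nuLeSet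
    (hμs : IsUniformMatrixTupleMeasure μs) {k : Fin s → ℕ} (hk : k ≠ 0) (m : ℕ) :
    μs (nuLeSet q k m) = (q : ℝ≥0∞)⁻¹ ^ (m - 1) := by
  have hindep : LinearIndependent (ZMod q) fun _ : Unit => digitTuple q k :=
    linearIndependent_unique_iff.mpr (digitTuple_ne_zero (Fact.out : q.Prime).one_lt hk)
  simpa [Set.iInter_const] using hμs.measure_iInter_nuLeSet hindep fun _ => m

theorem IsUniformMatrixTupleMeasure.measure_nuLeSet_inter_nuLeSet
    (hμs : IsUniformMatrixTupleMeasure μs) {k l : Fin s → ℕ}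
    (hkl : LinearIndependent (ZMod q) ![digitTuple q k, digitTuple q l]) (m₁ m₂ : ℕ) :
    μs (nuLeSet q k m₁ ∩ nuLeSet q l m₂) = (q : ℝ≥0∞)⁻¹ ^ (m₁ - 1 + (m₂ - 1)) := by
  have hindep : LinearIndependent (ZMod q) fun a => digitTuple q (![k, l] a) := by
    convert hkl with a
    fin_cases a <;> rfl
  have hset : nuLeSet q k m₁ ∩ nuLeSet q l m₂ = ⋂ a, nuLeSet q (![k, l] a) (![m₁, m₂] a) := by
    ext C
    simp [Fin.forall_fin_two]
  simpa [hset] using hμs.measure_iInter_nuLeSet hindep ![m₁, m₂]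

end UniformMatrixTuple

theorem measure_inter_nuLe_sets_eq_mul_general {q s : ℕ} (hq : q.Prime) {k l : Fin s → ℕ}
    (hk : k ≠ 0) (hl : l ≠ 0)
    (hdep : ¬∃ c : ZMod q, c ≠ 0 ∧ ∀ u, ∀ a, digitVec q (k u) a = c * digitVec q (l u) a)
    {m₁ m₂ : ℕ} (hm₁ : 1 ≤ m₁) (hm₂ : 1 ≤ m₂)
    {μs : Measure (Fin s → ℕ → ℕ → ZMod q)} (hμs : IsUniformMatrixTupleMeasure μs) :
    μs (nuLeSet q k m₁ ∩ nuLeSet q l m₂) = μs (nuLeSet q k m₁) * μs (nuLeSet q l m₂) ∧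
    μs (nuLeSet q k m₁ ∩ nuLeSet q l m₂) = (q : ℝ≥0∞)⁻¹ ^ (m₁ + m₂ - 2) := by
  have : Fact q.Prime := ⟨hq⟩
  have hindep : LinearIndependent (ZMod q) ![digitTuple q k, digitTuple q l] :=
    linearIndependent_pair_of_forall_ne_smul (digitTuple_ne_zero hq.one_lt hk)
      (digitTuple_ne_zero hq.one_lt hl)
      fun c hc h => hdep ⟨c, hc, fun u a => congrFun h (u, a)⟩
  rw [hμs.measure_nuLeSet_inter_nuLeSet hindep, hμs.measure_nuLeSet hk, hμs.measure_nuLeSet hl]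
  exact ⟨pow_add _ _ _, by congr 1; omega⟩

/-- **Independence of the events from Lemma 2 for strongly independent tuples.**
If `(k₁,…,k_s)` and `(ℓ₁,…,ℓ_s)` are not strongly dependent over `ZMod q`, then the
events `M(k₁,…,k_s; m₁) = {ν(C₁ᵀk⃗₁ + ⋯ + C_sᵀk⃗_s) ≤ −m₁}` and
`M(ℓ₁,…,ℓ_s; m₂) = {ν(C₁ᵀℓ⃗₁ + ⋯ + C_sᵀℓ⃗_s) ≤ −m₂}` are independent with respect to
`μ_s`, and `μ_s(M ∩ M') = μ_s(M)·μ_s(M') = q^{−(m₁+m₂−2)}`. -/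
theorem measure_inter_nuLe_sets_eq_mul (q s : ℕ) (hq : q.Prime) (hs : 1 ≤ s)
    (k l : Fin s → ℕ) (hk : ∀ u, 1 ≤ k u) (hl : ∀ u, 1 ≤ l u)
    (hdep : ¬∃ c : ZMod q, c ≠ 0 ∧ ∀ u, ∀ a, digitVec q (k u) a = c * digitVec q (l u) a)
    (m₁ m₂ : ℕ) (hm₁ : 1 ≤ m₁) (hm₂ : 1 ≤ m₂)
    (μs : Measure (Fin s → ℕ → ℕ → ZMod q)) (hμs : IsUniformMatrixTupleMeasure μs) :
    μs ({C : Fin s → ℕ → ℕ → ZMod q |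
          nuLe (fun i => ∑ u, matVec (transp (C u)) (k u) i) m₁} ∩
        {C : Fin s → ℕ → ℕ → ZMod q |
          nuLe (fun i => ∑ u, matVec (transp (C u)) (l u) i) m₂})
      = μs {C : Fin s → ℕ → ℕ → ZMod q |
          nuLe (fun i => ∑ u, matVec (transp (C u)) (k u) i) m₁} *
        μs {C : Fin s → ℕ → ℕ → ZMod q |
          nuLe (fun i => ∑ u, matVec (transp (C u)) (l u) i) m₂} ∧
    μs ({C : Fin s → ℕ → ℕ → ZMod q |
          nuLe (fun i => ∑ u, matVec (transp (C u)) (k u) i) m₁} ∩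
        {C : Fin s → ℕ → ℕ → ZMod q |
          nuLe (fun i => ∑ u, matVec (transp (C u)) (l u) i) m₂})
      = ((q : ℝ≥0∞)⁻¹) ^ (m₁ + m₂ - 2) := by
  have hne {n : Fin s → ℕ} (hn : ∀ u, 1 ≤ n u) : n ≠ 0 :=
    Function.ne_iff.mpr ⟨⟨0, hs⟩, Nat.one_le_iff_ne_zero.mp (hn _)⟩
  exact measure_inter_nuLe_sets_eq_mul_general hq (hne hk) (hne hl) hdep hm₁ hm₂ hμs
end
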